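/- arXiv:1311.0577 — 2 statements merged into one kernel-verified Lean document; each statement's English description precedes it below -/
import Mathlib

section
/- Let R = x^32 - 4x^31 - 62x^30 + 558x^29 - 248x^28 - 23560x^27 + 143499x^26 + 59489x^25 - 4280108x^24 + 17190864x^23 + 12517459x^22 - 344750256x^21 + 1225662500x^20 - 278789479x^19 - 14790203106x^18 + 64357190741x^17 - 83774789980x^16 - 406418167694x^15 + 2480836111912x^14 - 5273524311353x^13 - 3257558862543x^12 + 54285321863574x^11 - 162450534558477x^10 + 197719989210108x^9 + 250865100757790x^8 - 1714511602191278x^7 + 4206562171750919x^6 - 6661579151098950x^5 + 7460752526582377x^4 - 5959749341609879x^3 + 3269911760551427x^2 - 1113936554991727x + 178725601175511 ∈ ℚ[x], which is irreducible, and let K = ℚ[x]/(R) be the number field it defines. The discriminant of K over ℚ equals -31^49. -/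
open Polynomial

noncomputable def R : Polynomial ℚ :=
  X^32 - 4*X^31 - 62*X^30 + 558*X^29 - 248*X^28 - 23560*X^27 + 143499*X^26 + 59489*X^25 - 4280108*X^24 + 17190864*X^23 + 12517459*X^22 - 344750256*X^21 + 1225662500*X^20 - 278789479*X^19 - 14790203106*X^18 + 64357190741*X^17 - 83774789980*X^16 - 406418167694*X^15 + 2480836111912*X^14 - 5273524311353*X^13 - 3257558862543*X^12 + 54285321863574*X^11 - 162450534558477*X^10 + 197719989210108*X^9 + 250865100757790*X^8 - 1714511602191278*X^7 + 4206562171750919*X^6 - 6661579151098950*X^5 + 7460752526582377*X^4 - 5959749341609879*X^3 + 3269911760551427*X^2 - 1113936554991727*X + 178725601175511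

open scoped NumberField

/-- big-endian coefficient lists -/
noncomputable def PL : List ℤ → ℤ[X]
  | [] => 0
  | a :: l => C a * X ^ l.length + PL l

def forceN {α : Type} (n : ℕ) (k : ℕ → α) : α := Nat.casesOn n (k 0) (fun m => k (m + 1))

theorem forceN_eq {α : Type} (n : ℕ) (k : ℕ → α) : forceN n k = k n := by cases n <;> rfl

def forceZ {α : Type} (z : ℤ) (k : ℤ → α) : α :=
  Int.casesOn z (fun n => forceN n fun m => k (Int.ofNat m))
    (fun n => forceN n fun m => k (Int.negSucc m))

theorem forceZ_eq {α : Type} (z : ℤ) (k : ℤ → α) : forceZ z k = k z := by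
  cases z <;> simp [forceZ, forceN_eq]

def forceL {α : Type} : List ℤ → (List ℤ → α) → α
  | [], k => k []
  | a :: l, k => forceZ a fun a' => forceL l fun l' => k (a' :: l')

theorem forceL_eq {α : Type} (l : List ℤ) (k : List ℤ → α) : forceL l k = k l := by
  induction l generalizing k with
  | nil => rfl
  | cons a l ih => simp [forceL, forceZ_eq, ih]

/-- `b * f - a * g` coefficientwise -/
def comb (b a : ℤ) (f g : List ℤ) : List ℤ := List.zipWith (fun x y => b * x - a * y) f g

def content (l : List ℤ) : ℕ := l.foldr (fun x n => Nat.gcd x.natAbs n) 0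

theorem PL_comb (b a : ℤ) (f g : List ℤ) (h : f.length = g.length) :
    PL (comb b a f g) = C b * PL f - C a * PL g := by
  induction f generalizing g with
  | nil => cases g <;> simp_all [comb, PL]
  | cons x f ih =>
    cases g with
    | nil => simp at h
    | cons y g =>
      simp only [List.length_cons, add_left_inj] at h
      have := ih g h
      simp only [comb] at this
      simp only [comb, List.zipWith_cons_cons, PL, this, List.length_zipWith, h, min_self]
      simp only [map_sub, map_mul]
      ring

theorem PL_map (e : ℤ) (f : List ℤ) : PL (f.map (e * ·)) = C e * PL f := by
  induction f with
  | nil => simp [PL]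
  | cons x f ih => simp [PL, ih]; ring

theorem PL_snoc (f : List ℤ) : PL (f ++ [0]) = X * PL f := by
  induction f with
  | nil => simp [PL]
  | cons x f ih => simp [PL, ih, pow_succ]; ring

theorem PL_natDegree (f : List ℤ) (n : ℕ) (h : f.length ≤ n + 1) : (PL f).natDegree ≤ n := by
  induction f generalizing n with
  | nil => simp [PL]
  | cons x f ih =>
    simp only [List.length_cons, add_le_add_iff_right] at h
    refine (natDegree_add_le _ _).trans (max_le ?_ (ih n (by omega)))
    exact (natDegree_C_mul_X_pow_le _ _).trans h

theorem PL_coeff (b : ℤ) (f : List ℤ) (n : ℕ) (h : f.length = n) : (PL (b :: f)).coeff n = b := by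
  subst h
  simp only [PL, coeff_add, coeff_C_mul, coeff_X_pow_self, mul_one]
  rcases f with _ | ⟨y, f⟩
  · simp [PL]
  · rw [coeff_eq_zero_of_natDegree_lt, add_zero]
    have := PL_natDegree (y :: f) f.length (by simp)
    simp only [List.length_cons]; omega

/-- Euclid: returns `(A, B)` with `A * Res(f, g) = B`; `d` is the degree of `g`. -/
def eu : ℕ → List ℤ → List ℤ → ℤ × ℤ
  | 0, _, g => (1, g.headD 0)
  | d + 1, f, g =>
    match f, g with
    | a :: f', b :: g' =>
      forceL (comb b a f' (g' ++ [0])) fun h1 =>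
        match h1 with
        | c :: h1' =>
          forceL (comb b c h1' g') fun h2 =>
            forceN (content h2) fun e =>
              forceL (h2.map (fun x => x / (e : ℤ))) fun h =>
                if h.map ((e : ℤ) * ·) = h2 then
                  match eu d (b :: g') h with
                  | (A', B') => (A' * b ^ (2 * (d + 1)), b ^ 2 * (e : ℤ) ^ (d + 1) * B')
                else (0, 0)
        | [] => (0, 0)
    | _, _ => (0, 0)

theorem eu_spec (d : ℕ) (f g : List ℤ) (hf : f.length = d + 2) (hg : g.length = d + 1) :
    (eu d f g).1 * resultant (PL f) (PL g) (d + 1) d = (eu d f g).2 := by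
  induction d generalizing f g with
  | zero =>
    obtain ⟨b, rfl⟩ := List.length_eq_one_iff.1 hg
    simp [eu, PL]
  | succ d ih =>
    obtain _ | ⟨a, f'⟩ := f
    · simp at hf
    obtain _ | ⟨b, g'⟩ := g
    · simp at hg
    simp only [List.length_cons] at hf hg
    simp only [eu, forceL_eq, forceN_eq]
    have H1 : PL (comb b a f' (g' ++ [0])) = C b * PL (a :: f') - C a * X * PL (b :: g') := by
      rw [PL_comb _ _ _ _ (by simp; omega), PL_snoc]
      simp only [PL, show f'.length = g'.length + 1 by omega, pow_succ]
      ring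
    have hl1 : (comb b a f' (g' ++ [0])).length = d + 2 := by simp [comb]; omega
    generalize comb b a f' (g' ++ [0]) = h1 at *
    obtain _ | ⟨c, h1'⟩ := h1
    · simp
    simp only [List.length_cons] at hl1
    simp only
    have H2 : PL (comb b c h1' g') = C b * PL (c :: h1') - C c * PL (b :: g') := by
      rw [PL_comb _ _ _ _ (by omega)]
      simp only [PL, show h1'.length = g'.length by omega]
      ring
    have hl2 : (comb b c h1' g').length = d + 1 := by simp [comb]; omega
    generalize comb b c h1' g' = h2 at *
    generalize ((content h2 : ℕ) : ℤ) = e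
    have hlh : (h2.map (fun x => x / e)).length = d + 1 := by simpa
    generalize h2.map (fun x => x / e) = h at *
    split_ifs with hc
    swap
    · simp
    have key := ih (b :: g') h (by simpa using hg) hlh
    generalize eu d (b :: g') h = AB at *
    obtain ⟨A', B'⟩ := AB
    simp only at key ⊢
    have H3 : C (b ^ 2) * PL (a :: f') = C e * PL h + PL (b :: g') * (C (a * b) * X + C c) := by
      rw [← PL_map e h, hc, H2, H1]
      simp only [map_mul, map_pow]
      ring
    have hgd : (PL (b :: g')).natDegree ≤ d + 1 := PL_natDegree _ _ (by simp; omega)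
    have hhd : (PL h).natDegree ≤ d := PL_natDegree _ _ (by omega)
    have E : (b ^ 2) ^ (d + 1) * resultant (PL (a :: f')) (PL (b :: g')) (d + 1 + 1) (d + 1) =
        b ^ 2 * e ^ (d + 1) * resultant (PL (b :: g')) (PL h) (d + 1) d := by
      rw [← resultant_C_mul_left, H3, resultant_add_mul_left, resultant_C_mul_left,
        show d + 1 + 1 = d + 2 by rfl,
        resultant_add_left_deg _ _ _ _ _ hhd, PL_coeff _ _ _ (by omega),
        resultant_comm _ _ d]
      · have h1 : ((-1 : ℤ)) ^ ((d + 1) * 2) = 1 := Even.neg_one_pow (by simp)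
        have h2 : ((-1 : ℤ)) ^ (d * (d + 1)) = 1 := Even.neg_one_pow (Nat.even_mul_succ_self d)
        rw [h1, h2]; ring
      · have : (C (a * b) * X + C c).natDegree ≤ 1 := natDegree_linear_le
        omega
      · exact hgd
    rw [← key]
    calc _ = A' * ((b ^ 2) ^ (d + 1) * resultant (PL (a :: f')) (PL (b :: g')) (d + 1 + 1) (d + 1)) := by
          rw [pow_mul]; ring
      _ = _ := by rw [E]; ring

def RL : List ℤ := [1, -4, -62, 558, -248, -23560, 143499, 59489, -4280108, 17190864, 12517459, -344750256, 1225662500, -278789479, -14790203106, 64357190741, -83774789980, -406418167694, 2480836111912, -5273524311353, -3257558862543, 54285321863574, -162450534558477, 197719989210108, 250865100757790, -1714511602191278, 4206562171750919, -6661579151098950, 7460752526582377, -5959749341609879, 3269911760551427, -1113936554991727, 178725601175511]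
def RL' : List ℤ := [32, -124, -1860, 16182, -6944, -636120, 3730974, 1487225, -102722592, 395389872, 275384098, -7239755376, 24513250000, -5297000101, -266223655908, 1094072242597, -1340396639680, -6096272515410, 34731705566768, -68555816047589, -39090706350516, 597138540499314, -1624505345584770, 1779479902890972, 2006920806062320, -12001581215338946, 25239373030505514, -33307895755494750, 29843010106329508, -17879248024829637, 6539823521102854, -1113936554991727]
def DD : ℕ := 4621542365037011549881917992698086399551286222805806651455471354485979522288448519053694007704752104441885300303023505233283093106949629952750090124173398979919769161443721248719376749376773603550699287264595080975
def aa : ℤ := 3222794943094601668294333081874817718410041280162640265466874638171676020855476596622631245376561659911630746132581067889234401615162383038333261415115826293386751657189294626544277053321358519964675776576831870416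

set_option maxRecDepth 100000 in
theorem eu_check : (eu 31 RL RL').1 ≠ 0 ∧
    (eu 31 RL RL').2 = (eu 31 RL RL').1 * (-31 ^ 49 * (DD : ℤ) ^ 2) := by
  decide +kernel

def TL : List ℤ := [-2, 18, -8, -760, 4629, 1919, -138068, 554544, 403789, -11120976, 39537500, -8993209, -477103326, 2076038411, -2702412580, -13110263474, 80026971352, -170113687463, -105082543953, 1751139414954, -5240339824467, 6378064168068, 8092422605090, -55306825877138, 135695553927449, -214889650035450, 240669436341367, -192249978761609, 105481024533917, -35933437257797, 5765341973401]


theorem norm_res {K : Type} [Field K] [NumberField K] (pb : PowerBasis ℚ K) (g : ℚ[X]) (n : ℕ)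
    (hg : g.natDegree ≤ n) :
    Algebra.norm ℚ (aeval pb.gen g) =
      resultant (minpoly ℚ pb.gen) g (minpoly ℚ pb.gen).natDegree n := by
  classical
  let E := AlgebraicClosure ℚ
  apply (algebraMap ℚ E).injective
  have hm := minpoly.monic pb.isIntegral_gen
  have hs : ((minpoly ℚ pb.gen).map (algebraMap ℚ E)).Splits := IsAlgClosed.splits _
  rw [Algebra.norm_eq_prod_embeddings ℚ E, ← resultant_map_map,
    ← natDegree_map (f := algebraMap ℚ E) (p := minpoly ℚ pb.gen),
    resultant_eq_prod_eval _ _ _ (by simpa using hg) hs, (hm.map _).leadingCoeff, one_pow, one_mul]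
  have hsep : IsSeparable ℚ pb.gen := Algebra.IsSeparable.isSeparable ℚ pb.gen
  have hnd : ((minpoly ℚ pb.gen).aroots E).Nodup := nodup_aroots_iff_of_splits (minpoly.ne_zero pb.isIntegral_gen) hs |>.2 hsep
  change _ = (((minpoly ℚ pb.gen).aroots E).map _).prod
  have h1 : (((minpoly ℚ pb.gen).aroots E).map (eval · (g.map (algebraMap ℚ E)))).prod =
      ∏ x ∈ ((minpoly ℚ pb.gen).aroots E).toFinset, eval x (g.map (algebraMap ℚ E)) := by
    rw [Finset.prod_multiset_map_count]
    refine Finset.prod_congr rfl fun x hx => ?_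
    rw [Multiset.count_eq_one_of_mem hnd (Multiset.mem_toFinset.1 hx), pow_one]
  rw [h1]
  rw [← Finset.prod_coe_sort (((minpoly ℚ pb.gen).aroots E).toFinset)]
  symm
  let e₁ : {x // x ∈ ((minpoly ℚ pb.gen).aroots E).toFinset} ≃
      {x // x ∈ (minpoly ℚ pb.gen).aroots E} :=
    Equiv.subtypeEquivRight (fun x => Multiset.mem_toFinset)
  refine Fintype.prod_equiv (e₁.trans (pb.liftEquiv' (B := E)).symm)
    (fun x => eval x.1 (g.map (algebraMap ℚ E))) (fun σ : K →ₐ[ℚ] E => σ (aeval pb.gen g)) ?_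
  intro x
  have hx : (pb.liftEquiv'.symm ⟨x.1, Multiset.mem_toFinset.1 x.2⟩ : K →ₐ[ℚ] E) pb.gen = x.1 := by
    exact pb.lift_gen x.1 (mem_aroots.1 (Multiset.mem_toFinset.1 x.2)).2
  change _ = (pb.liftEquiv'.symm ⟨x.1, Multiset.mem_toFinset.1 x.2⟩ : K →ₐ[ℚ] E) (aeval pb.gen g)
  rw [← aeval_algHom_apply, hx, eval_map_algebraMap]

theorem core {K : Type} [Field K] [NumberField K] (pb : PowerBasis ℚ K) (α : NumberField.RingOfIntegers K)
    (hα : pb.gen = algebraMap _ K α) :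
    ∃ M : Matrix (Fin pb.dim) (Fin pb.dim) ℤ,
      Algebra.discr ℚ pb.basis = (M.det : ℚ) ^ 2 * (NumberField.discr K : ℚ) ∧
      (∀ (v : Fin pb.dim → ℤ) (m : ℤ) (w : NumberField.RingOfIntegers K),
        ∑ i, (v i) • α ^ (i : ℕ) = m • w → ∀ i, m ∣ M.det * v i) ∧
      (∀ p : ℕ, p.Prime → (p : ℤ) ∣ M.det → ∃ v : Fin pb.dim → ℤ, (∃ i, ¬ (p : ℤ) ∣ v i) ∧
        ∃ w : NumberField.RingOfIntegers K, ∑ i, (v i) • α ^ (i : ℕ) = (p : ℤ) • w) := by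
  classical
  let b₀ := NumberField.RingOfIntegers.basis K
  have hcard : Fintype.card (Module.Free.ChooseBasisIndex ℤ (NumberField.RingOfIntegers K)) = pb.dim := by
    rw [← Module.finrank_eq_card_chooseBasisIndex, NumberField.RingOfIntegers.rank, pb.finrank]
  let e : Module.Free.ChooseBasisIndex ℤ (NumberField.RingOfIntegers K) ≃ Fin pb.dim :=
    Fintype.equivFinOfCardEq hcard
  let b : Module.Basis (Fin pb.dim) ℤ (NumberField.RingOfIntegers K) := b₀.reindex e
  let M : Matrix (Fin pb.dim) (Fin pb.dim) ℤ := b.toMatrix (fun i => α ^ (i : ℕ))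
  have hM : ∀ j, ∑ i, M i j • b i = α ^ (j : ℕ) := fun j => b.sum_toMatrix_smul_self _ j
  have hsum : ∀ v : Fin pb.dim → ℤ, ∑ i, (v i) • α ^ (i : ℕ) = ∑ i, (M.mulVec v) i • b i := by
    intro v
    simp_rw [← hM, Finset.smul_sum, Matrix.mulVec, dotProduct, Finset.sum_smul]
    rw [Finset.sum_comm]
    refine Finset.sum_congr rfl fun x _ => Finset.sum_congr rfl fun y _ => ?_
    rw [smul_smul, mul_comm]
  have hdiv : ∀ (v : Fin pb.dim → ℤ) (m : ℤ), (∃ w, ∑ i, (v i) • α ^ (i : ℕ) = m • w) ↔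
      ∀ i, m ∣ (M.mulVec v) i := by
    intro v m
    rw [hsum]
    constructor
    · rintro ⟨w, hw⟩ i
      have := congrArg (fun x => b.repr x i) hw
      simp only [map_smul, Module.Basis.repr_sum_self, Finsupp.smul_apply] at this
      exact ⟨_, this⟩
    · intro h
      choose c hc using h
      refine ⟨∑ i, c i • b i, ?_⟩
      simp_rw [hc, Finset.smul_sum, smul_smul]
  refine ⟨M, ?_, ?_, ?_⟩
  · have h1 : (pb.basis : Fin pb.dim → K) =
        Matrix.vecMul (fun i => algebraMap (NumberField.RingOfIntegers K) K (b i))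
          ((M.map (Int.cast : ℤ → ℚ)).map (algebraMap ℚ K)) := by
      ext j
      rw [pb.coe_basis]
      simp only
      rw [hα, ← map_pow, ← hM j, map_sum]
      simp [Matrix.vecMul, dotProduct, mul_comm]
    rw [h1, Algebra.discr_of_matrix_vecMul]
    congr 1
    · congr 1
      exact (RingHom.map_det (Int.castRingHom ℚ) M).symm
    · rw [NumberField.coe_discr, ← Algebra.discr_reindex ℚ (NumberField.integralBasis K) e]
      congr 1
      ext i
      simp [b, b₀]
  · intro v m w h i
    have h2 := (hdiv v m).1 ⟨w, h⟩
    have h3 : M.det * v i = ∑ j, M.adjugate i j * (M.mulVec v) j := by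
      have : M.adjugate.mulVec (M.mulVec v) = M.det • v := by
        rw [Matrix.mulVec_mulVec, Matrix.adjugate_mul, Matrix.smul_mulVec, Matrix.one_mulVec]
      have := congrFun this i
      simpa [Matrix.mulVec, dotProduct] using this.symm
    rw [h3]
    exact Finset.dvd_sum fun j _ => Dvd.dvd.mul_left (h2 j) _
  · intro p hp hdet
    have := Fact.mk hp
    have h0 : (M.map (Int.cast : ℤ → ZMod p)).det = 0 := by
      have := RingHom.map_det (Int.castRingHom (ZMod p)) M
      rw [eq_comm] at this
      refine this.trans ?_
      simpa using (ZMod.intCast_zmod_eq_zero_iff_dvd _ _).2 hdet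
    obtain ⟨u, hu, hu0⟩ := Matrix.exists_mulVec_eq_zero_iff.2 h0
    have hlift : ∀ i, ((u i).val : ZMod p) = u i := fun i => ZMod.natCast_zmod_val _
    refine ⟨fun i => ((u i).val : ℤ), ?_, (hdiv _ _).2 ?_⟩
    · by_contra hcon
      push Not at hcon
      apply hu
      ext i
      have := (ZMod.intCast_zmod_eq_zero_iff_dvd _ p).2 (hcon i)
      simpa [hlift] using this
    · intro i
      rw [← ZMod.intCast_zmod_eq_zero_iff_dvd]
      have := congrFun hu0 i
      simpa [Matrix.mulVec, dotProduct, hlift] using this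


theorem dvd_part {K : Type} [Field K] [NumberField K] (f : ℤ[X]) (hf : f.Monic)
    (α : 𝓞 K) (hα : aeval α f = 0) (a D m m' : ℤ) (hD : D ≠ 0) (hd : 1 < f.natDegree)
    (h0 : f.eval a = D ^ 2 * m) (h1 : f.derivative.eval a = D * m') :
    ∃ G : ℤ[X], G.Monic ∧ G.natDegree + 1 = f.natDegree ∧ ∃ w : 𝓞 K, aeval α G = D • w := by
  obtain ⟨G, hG⟩ := X_sub_C_dvd_sub_C_eval (p := f) (a := a)
  obtain ⟨Q, hQ⟩ := X_sub_C_dvd_sub_C_eval (p := G) (a := a)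
  have hdeg : (C (f.eval a)).degree < f.degree :=
    degree_C_le.trans_lt (natDegree_pos_iff_degree_pos.1 (by omega))
  have hmon : (f - C (f.eval a)).Monic := hf.sub_of_left hdeg
  have hGm : G.Monic := by
    rw [hG] at hmon
    exact (monic_X_sub_C a).of_mul_monic_left hmon
  have hGd : G.natDegree + 1 = f.natDegree := by
    have := natDegree_sub_C (p := f) (a := f.eval a)
    rw [hG, (monic_X_sub_C a).natDegree_mul hGm, natDegree_X_sub_C] at this
    omega
  have hGa : G.eval a = D * m' := by
    rw [← h1]
    have := congrArg (fun p => (derivative p).eval a) hG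
    simpa using this.symm
  refine ⟨G, hGm, hGd, ?_⟩
  set g : 𝓞 K := aeval α G with hg
  set q : 𝓞 K := aeval α Q with hq
  set t : 𝓞 K := α - (a : 𝓞 K) with ht
  have e1 : -((D : 𝓞 K) ^ 2 * m) = t * g := by
    have := congrArg (aeval α) hG
    simpa [hα, h0, ← hg, ← ht] using this
  have e2 : g - (D : 𝓞 K) * m' = t * q := by
    have := congrArg (aeval α) hQ
    simpa [hGa, ← hg, ← hq, ← ht] using this
  have e3 : g ^ 2 = (D : 𝓞 K) * m' * g - (D : 𝓞 K) ^ 2 * m * q := by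
    linear_combination g * e2 - q * e1
  have hDK : (D : K) ≠ 0 := by exact_mod_cast hD
  have hint : IsIntegral (𝓞 K) ((g : K) / D) := by
    refine ⟨X ^ 2 - C (m' : 𝓞 K) * X + C ((m : 𝓞 K) * q), by monicity!, ?_⟩
    have e3' := congrArg (algebraMap (𝓞 K) K) e3
    simp only [map_mul, map_sub, map_pow, map_intCast] at e3'
    simp only [eval₂_add, eval₂_sub, eval₂_mul, eval₂_pow, eval₂_X, eval₂_C]
    simp only [map_mul, map_intCast]
    field_simp
    linear_combination e3'
  have hint' : IsIntegral ℤ ((g : K) / D) := isIntegral_trans (R := ℤ) (A := 𝓞 K) _ hint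
  obtain ⟨w, hw⟩ : ∃ w : 𝓞 K, algebraMap (𝓞 K) K w = (g : K) / D := ⟨⟨_, hint'⟩, rfl⟩
  refine ⟨w, ?_⟩
  apply NumberField.RingOfIntegers.ext
  rw [zsmul_eq_mul]
  change (g : K) = algebraMap (𝓞 K) K (D * w)
  rw [map_mul, map_intCast, hw]
  field_simp

theorem max_part {K : Type} [Field K] [NumberField K] (p : ℕ) [Fact p.Prime] (f : ℤ[X]) (hf : f.Monic)
    (α : 𝓞 K) (hα : aeval α f = 0) (n : ℕ) (hn : f.natDegree = n + 1)
    (hfin : Module.finrank ℚ K = n + 1) (b c : ℤ)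
    (hfac : f.map (Int.castRingHom (ZMod p)) = (X - C (b : ZMod p)) ^ n * (X - C (c : ZMod p)))
    (hn0 : n ≠ 0)
    (hb : ∃ s : ℤ, Algebra.norm ℤ (α - (b : 𝓞 K)) = p * s ∧ ¬ (p : ℤ) ∣ s)
    (hc : ∃ s : ℤ, Algebra.norm ℤ (α - (c : 𝓞 K)) = p * s ∧ ¬ (p : ℤ) ∣ s)
    (v : ℤ[X]) (hv : v.natDegree < n + 1) (w : 𝓞 K) (hvw : aeval α v = (p : ℤ) • w) :
    ∀ i, (p : ℤ) ∣ v.coeff i := by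
  by_contra hcon
  have hp : p.Prime := Fact.out
  have hpp : Prime (p : ℤ) := Nat.prime_iff_prime_int.1 hp
  set φ : ℤ[X] →+* (ZMod p)[X] := mapRingHom (Int.castRingHom (ZMod p)) with hφ
  have hφs : Function.Surjective φ := map_surjective _ (ZMod.ringHom_surjective _)
  let J : Ideal ℤ[X] := (Ideal.span {(p : 𝓞 K)}).comap (aeval α : ℤ[X] →ₐ[ℤ] 𝓞 K)
  have memJ : ∀ u : ℤ[X], u ∈ J ↔ ∃ z : 𝓞 K, aeval α u = p * z := by
    intro u
    simp only [J, Ideal.mem_comap, Ideal.mem_span_singleton]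
    rfl
  let I : Ideal (ZMod p)[X] := J.map φ
  have hφ0 : ∀ u : ℤ[X], φ u = 0 → u ∈ J := by
    intro u hu
    have : C (p : ℤ) ∣ u := by
      rw [C_dvd_iff_dvd_coeff]
      intro i
      have := congrArg (fun q => coeff q i) hu
      simpa [hφ, ZMod.intCast_zmod_eq_zero_iff_dvd] using this
    obtain ⟨t, rfl⟩ := this
    rw [memJ]
    exact ⟨aeval α t, by simp⟩
  have back : ∀ u : ℤ[X], φ u ∈ I → u ∈ J := by
    intro u hu
    obtain ⟨u', hu', he⟩ := (Ideal.mem_map_iff_of_surjective φ hφs).1 hu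
    have := hφ0 (u - u') (by rw [map_sub, he, sub_self])
    simpa using J.add_mem this hu'
  have hRI : φ f ∈ I := Ideal.mem_map_of_mem _ ((memJ f).2 ⟨0, by simp [hα]⟩)
  have hvI : φ v ∈ I := Ideal.mem_map_of_mem _ ((memJ v).2 ⟨w, by simp [hvw]⟩)
  have hv0 : φ v ≠ 0 := by
    intro h
    apply hcon
    intro i
    have := congrArg (fun q => coeff q i) h
    simpa [hφ, ZMod.intCast_zmod_eq_zero_iff_dvd] using this
  have hfac' : φ f = (X - C (b : ZMod p)) ^ n * (X - C (c : ZMod p)) := hfac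
  obtain ⟨h, hI⟩ : ∃ h, I = Ideal.span {h} := (IsPrincipalIdealRing.principal I).principal
  rw [hI, Ideal.mem_span_singleton] at hRI hvI
  obtain ⟨k, hk⟩ := hRI
  have hf0 : φ f ≠ 0 := (hf.map _).ne_zero
  have hfd : (φ f).natDegree = n + 1 := by rw [← hn]; exact hf.natDegree_map _
  have hh0 : h ≠ 0 := by rintro rfl; simp at hk; exact hf0 hk
  have hk0 : k ≠ 0 := by rintro rfl; simp at hk; exact hf0 hk
  have hhd : h.natDegree < n + 1 :=
    (natDegree_le_of_dvd hvI hv0).trans_lt ((natDegree_map_le).trans_lt hv)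
  have hku : ¬ IsUnit k := by
    intro hu
    have := natDegree_eq_zero_of_isUnit hu
    have h2 := natDegree_mul hh0 hk0
    rw [← hk, hfd] at h2
    omega
  obtain ⟨q, hq, hqk⟩ := WfDvdMonoid.exists_irreducible_factor hku hk0
  have hor : q ∣ X - C (b : ZMod p) ∨ q ∣ X - C (c : ZMod p) := by
    have : q ∣ (X - C (b : ZMod p)) ^ n * (X - C (c : ZMod p)) := by
      rw [← hfac', hk]; exact hqk.mul_left _
    exact (hq.prime.dvd_or_dvd this).imp_left hq.prime.dvd_of_dvd_pow
  have assoc : ∀ x : ZMod p, q ∣ X - C x → X - C x ∣ k := fun x hx =>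
    ((hq.associated_of_dvd (irreducible_X_sub_C x) hx).symm.dvd).trans hqk
  obtain ⟨sb, hsb, hsb'⟩ := hb
  obtain ⟨sc, hsc, hsc'⟩ := hc
  have hNp : Algebra.norm ℤ (p : 𝓞 K) = (p : ℤ) ^ (n + 1) := by
    rw [Algebra.norm_natCast, NumberField.RingOfIntegers.rank, hfin]
  have hp0 : (p : ℤ) ≠ 0 := hpp.ne_zero
  rcases hor with hx | hx
  · obtain ⟨k', rfl⟩ := assoc _ hx
    obtain ⟨n, rfl⟩ : ∃ m, n = m + 1 := ⟨n - 1, by omega⟩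
    have hmem : (X - C b) ^ n * (X - C c) ∈ J := by
      apply back
      rw [hI, Ideal.mem_span_singleton]
      refine ⟨k', ?_⟩
      apply mul_left_cancel₀ (X_sub_C_ne_zero (b : ZMod p))
      rw [hfac'] at hk
      simp only [hφ, map_mul, map_pow, map_sub, coe_mapRingHom, map_X, map_C, Int.coe_castRingHom] at hk ⊢
      linear_combination hk
    obtain ⟨z, hz⟩ := (memJ _).1 hmem
    simp only [map_mul, map_pow, map_sub, aeval_X, aeval_C, eq_intCast, map_intCast] at hz
    have := congrArg (Algebra.norm ℤ) hz
    rw [map_mul, map_pow, map_mul, hsb, hsc, hNp] at this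
    have h2 : (p : ℤ) ^ (n + 1) * (sb ^ n * sc) = p ^ (n + 1) * (p * Algebra.norm ℤ z) := by
      linear_combination this
    have h3 : (p : ℤ) ∣ sb ^ n * sc := ⟨_, mul_left_cancel₀ (pow_ne_zero _ hp0) h2⟩
    rcases hpp.dvd_or_dvd h3 with h4 | h4
    · exact hsb' (hpp.dvd_of_dvd_pow h4)
    · exact hsc' h4
  · obtain ⟨k', rfl⟩ := assoc _ hx
    have hmem : (X - C b) ^ n ∈ J := by
      apply back
      rw [hI, Ideal.mem_span_singleton]
      refine ⟨k', ?_⟩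
      apply mul_left_cancel₀ (X_sub_C_ne_zero (c : ZMod p))
      rw [hfac'] at hk
      simp only [hφ, map_pow, map_sub, coe_mapRingHom, map_X, map_C, Int.coe_castRingHom, Polynomial.map_pow, Polynomial.map_sub] at hk ⊢
      linear_combination hk
    obtain ⟨z, hz⟩ := (memJ _).1 hmem
    simp only [map_pow, map_sub, aeval_X, aeval_C, eq_intCast, map_intCast] at hz
    have := congrArg (Algebra.norm ℤ) hz
    rw [map_pow, map_mul, hsb, hNp] at this
    have h2 : (p : ℤ) ^ n * (sb ^ n) = p ^ n * (p * Algebra.norm ℤ z) := by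
      linear_combination this
    have h3 : (p : ℤ) ∣ sb ^ n := ⟨_, mul_left_cancel₀ (pow_ne_zero _ hp0) h2⟩
    exact hsb' (hpp.dvd_of_dvd_pow h3)


def evL : List ℤ → ℤ → ℤ
  | [], _ => 0
  | a :: l, x => a * x ^ l.length + evL l x

theorem evL_eq (l : List ℤ) (x : ℤ) : (PL l).eval x = evL l x := by
  induction l with
  | nil => simp [PL, evL]
  | cons a l ih => simp [PL, evL, ih]

set_option maxRecDepth 100000 in
theorem ev_a0 : evL RL aa = (DD : ℤ) ^ 2 * (evL RL aa / (DD : ℤ) ^ 2) := by decide +kernel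

set_option maxRecDepth 100000 in
theorem ev_a1 : evL RL' aa = (DD : ℤ) * (evL RL' aa / (DD : ℤ)) := by decide +kernel

set_option maxRecDepth 100000 in
theorem ev_20 : evL RL 20 = 31 * (evL RL 20 / 31) ∧ ¬ (31 : ℤ) ∣ (evL RL 20 / 31) := by
  decide +kernel

set_option maxRecDepth 100000 in
theorem ev_4 : evL RL 4 = 31 * (evL RL 4 / 31) ∧ ¬ (31 : ℤ) ∣ (evL RL 4 / 31) := by
  decide +kernel

theorem PL_R : (PL RL).map (Int.castRingHom ℚ) = R := by
  simp [PL, RL, R]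
  ring

theorem PL_deg : (PL RL).natDegree = 32 := by
  refine le_antisymm (PL_natDegree _ _ (by decide)) (le_natDegree_of_ne_zero ?_)
  rw [RL, PL_coeff _ _ _ (by decide)]
  decide

theorem PL_monic : (PL RL).Monic := by
  rw [Monic, leadingCoeff, PL_deg, RL, PL_coeff _ _ _ (by decide)]

theorem PL_der : derivative (PL RL) = PL RL' := by
  simp [PL, RL, RL']
  ring

theorem PL_T : PL RL = (X ^ 31 - C 20) * (X - C 4) + C 31 * PL TL := by
  simp [PL, RL, TL]
  ring

theorem PL_fac : (PL RL).map (Int.castRingHom (ZMod 31)) =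
    (X - C ((20 : ℤ) : ZMod 31)) ^ 31 * (X - C ((4 : ℤ) : ZMod 31)) := by
  have h31 : (Int.castRingHom (ZMod 31)) 31 = 0 := by decide
  have : Fact (Nat.Prime 31) := ⟨by norm_num⟩
  have h20 : ((20 : ℤ) : ZMod 31) ^ 31 = ((20 : ℤ) : ZMod 31) := ZMod.pow_card _
  rw [PL_T, sub_pow_char, ← C_pow, h20]
  simp only [Polynomial.map_add, Polynomial.map_mul, Polynomial.map_sub, Polynomial.map_pow, map_X,
    map_C, h31, C_0, zero_mul, add_zero]
  rfl

theorem norm_sub_int {K : Type} [Field K] [NumberField K] (pb : PowerBasis ℚ K)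
    (hm : minpoly ℚ pb.gen = R) (α : 𝓞 K) (hα : pb.gen = algebraMap (𝓞 K) K α) (b : ℤ) :
    Algebra.norm ℤ (α - (b : 𝓞 K)) = evL RL b := by
  have hdeg : R.natDegree = 32 := by
    rw [← PL_R, PL_monic.natDegree_map, PL_deg]
  have h1 : ((α - (b : 𝓞 K) : 𝓞 K) : K) = aeval pb.gen (X - C (b : ℚ)) := by
    simp [hα]
  have h2 := norm_res pb (X - C (b : ℚ)) 1 (natDegree_X_sub_C_le _)
  rw [hm, hdeg, resultant_X_sub_C_right _ _ _ hdeg.le, ← PL_R] at h2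
  have h3 : eval (b : ℚ) ((PL RL).map (Int.castRingHom ℚ)) = ((evL RL b : ℤ) : ℚ) := by
    rw [← evL_eq]
    exact eval_intCast_map (Int.castRingHom ℚ) (PL RL) b
  rw [h3] at h2
  have h4 : ((Algebra.norm ℤ (α - (b : 𝓞 K)) : ℤ) : ℚ) = ((evL RL b : ℤ) : ℚ) := by
    rw [Algebra.coe_norm_int, h1, h2]
    norm_num
  exact_mod_cast h4

theorem disc_val {K : Type} [Field K] [NumberField K] (pb : PowerBasis ℚ K)
    (hm : minpoly ℚ pb.gen = R) (hd : pb.dim = 32) :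
    Algebra.discr ℚ pb.basis = ((-31 ^ 49 * (DD : ℤ) ^ 2 : ℤ) : ℚ) := by
  have hdeg : R.natDegree = 32 := by
    rw [← PL_R, PL_monic.natDegree_map, PL_deg]
  have hfin : Module.finrank ℚ K = 32 := by rw [pb.finrank, hd]
  have hder : R.derivative = (PL RL').map (Int.castRingHom ℚ) := by
    rw [← PL_R, derivative_map, PL_der]
  have hres : resultant (PL RL) (PL RL') 32 31 = -31 ^ 49 * (DD : ℤ) ^ 2 := by
    have h := eu_spec 31 RL RL' (by decide) (by decide)
    obtain ⟨h1, h2⟩ := eu_check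
    rw [h2] at h
    exact mul_left_cancel₀ h1 h
  rw [Algebra.discr_powerBasis_eq_norm, hm,
    norm_res pb R.derivative 31 (by simpa [hdeg] using natDegree_derivative_le R), hm, hdeg, hder,
    ← PL_R, resultant_map_map, hres, hfin]
  norm_num

theorem sum_aeval {S : Type} [CommRing S] (α : S) (n : ℕ) (v : ℤ[X]) (hv : v.natDegree < n) :
    ∑ i : Fin n, v.coeff i • α ^ (i : ℕ) = aeval α v := by
  rw [aeval_eq_sum_range' hv, Fin.sum_univ_eq_sum_range (fun i => v.coeff i • α ^ i)]

theorem main_K {K : Type} [Field K] [NumberField K] (pb : PowerBasis ℚ K)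
    (hm : minpoly ℚ pb.gen = R) (hd : pb.dim = 32) : NumberField.discr K = -31 ^ 49 := by
  have hfin : Module.finrank ℚ K = 32 := by rw [pb.finrank, hd]
  have hroot : aeval pb.gen (PL RL) = 0 := by
    have h := minpoly.aeval ℚ pb.gen
    rw [hm, ← PL_R] at h
    rwa [← aeval_map_algebraMap ℚ]
  have hint : IsIntegral ℤ pb.gen := ⟨PL RL, PL_monic, hroot⟩
  obtain ⟨α, hα⟩ : ∃ α : 𝓞 K, pb.gen = algebraMap (𝓞 K) K α := ⟨⟨pb.gen, hint⟩, rfl⟩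
  have hα0 : aeval α (PL RL) = 0 := by
    apply FaithfulSMul.algebraMap_injective (𝓞 K) K
    rw [map_zero, ← aeval_algebraMap_apply, ← hα, hroot]
  obtain ⟨M, hM1, hM2, hM3⟩ := core pb α hα
  rw [disc_val pb hm hd] at hM1
  have hM1' : -31 ^ 49 * (DD : ℤ) ^ 2 = M.det ^ 2 * NumberField.discr K := by exact_mod_cast hM1
  have hDD : (DD : ℤ) ≠ 0 := by decide +kernel
  obtain ⟨G, hG, hGd, w, hw⟩ := dvd_part (PL RL) PL_monic α hα0 aa DD _ _ hDD
    (by rw [PL_deg]; norm_num) (by rw [evL_eq]; exact ev_a0)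
    (by rw [PL_der, evL_eq]; exact ev_a1)
  rw [PL_deg] at hGd
  have hGd' : G.natDegree = 31 := by omega
  have hdvd : (DD : ℤ) ∣ M.det := by
    have h := hM2 (fun i => G.coeff i) DD w
      (by rw [sum_aeval α pb.dim G (by omega), hw]) ⟨31, by omega⟩
    have h1 : G.coeff 31 = 1 := by rw [← hGd']; exact hG
    simpa [h1] using h
  have h31 : ¬ (31 : ℤ) ∣ M.det := by
    intro h
    have : Fact (Nat.Prime 31) := ⟨by norm_num⟩
    obtain ⟨v, ⟨i, hi⟩, w, hw⟩ := hM3 31 (by norm_num) (by exact_mod_cast h)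
    let V : ℤ[X] := ∑ j : Fin pb.dim, C (v j) * X ^ (j : ℕ)
    have hVa : aeval α V = ((31 : ℕ) : ℤ) • w := by
      rw [← hw]
      simp [V, map_sum]
    have hVc : V.coeff (i : ℕ) = v i := by
      simp only [V, finsetSum_coeff, coeff_C_mul, coeff_X_pow]
      rw [Finset.sum_eq_single i]
      · simp
      · intro j _ hj
        have : (i : ℕ) ≠ j := fun h => hj (Fin.ext h.symm)
        simp [this]
      · simp
    have hVd : V.natDegree < 31 + 1 := by
      have : V.natDegree ≤ 31 := natDegree_sum_le_of_forall_le _ _ fun j _ =>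
        (natDegree_C_mul_X_pow_le _ _).trans (by have := j.2; omega)
      omega
    have := max_part 31 (PL RL) PL_monic α hα0 31 PL_deg hfin 20 4 PL_fac (by norm_num)
      ⟨_, (norm_sub_int pb hm α hα 20).trans ev_20.1, ev_20.2⟩
      ⟨_, (norm_sub_int pb hm α hα 4).trans ev_4.1, ev_4.2⟩ V hVd w hVa i
    rw [hVc] at this
    exact hi this
  obtain ⟨k, hk⟩ := hdvd
  have hk1 : k ^ 2 * NumberField.discr K = -31 ^ 49 := by
    apply mul_left_cancel₀ (pow_ne_zero 2 hDD)
    rw [hk] at hM1'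
    linear_combination -hM1'
  have hk31 : ¬ (31 : ℤ) ∣ k := fun h => h31 (hk ▸ h.mul_left _)
  have hcop : IsCoprime (k ^ 2) ((31 : ℤ) ^ 49) := by
    apply IsCoprime.pow
    have hp : Prime (31 : ℤ) := by
      rw [Int.prime_iff_natAbs_prime]; norm_num
    exact ((Prime.coprime_iff_not_dvd hp).2 hk31).symm
  have hu : IsUnit (k ^ 2) := by
    apply hcop.isUnit_of_dvd'  (dvd_refl _)
    exact ⟨-NumberField.discr K, by linear_combination hk1⟩
  have hk2 : k ^ 2 = 1 := by
    rcases Int.isUnit_iff.1 hu with h | h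
    · exact h
    · nlinarith [sq_nonneg k]
  rwa [hk2, one_mul] at hk1

theorem discr_R (hR : Irreducible R) :
    haveI : Fact (Irreducible R) := ⟨hR⟩
    haveI : CharZero (AdjoinRoot R) :=
      charZero_of_injective_algebraMap (algebraMap ℚ (AdjoinRoot R)).injective
    haveI : FiniteDimensional ℚ (AdjoinRoot R) :=
      (AdjoinRoot.powerBasis hR.ne_zero).finite
    haveI : NumberField (AdjoinRoot R) := ⟨⟩
    NumberField.discr (AdjoinRoot R) = -31 ^ 49 := by
  have : Fact (Irreducible R) := ⟨hR⟩
  have h1 : CharZero (AdjoinRoot R) :=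
    charZero_of_injective_algebraMap (algebraMap ℚ (AdjoinRoot R)).injective
  have h2 : FiniteDimensional ℚ (AdjoinRoot R) :=
    (AdjoinRoot.powerBasis hR.ne_zero).finite
  have h3 : NumberField (AdjoinRoot R) := ⟨⟩
  have hmon : R.Monic := by
    rw [← PL_R]
    exact PL_monic.map _
  have hdeg : R.natDegree = 32 := by
    rw [← PL_R, PL_monic.natDegree_map, PL_deg]
  have key := main_K (K := AdjoinRoot R)
  exact key (AdjoinRoot.powerBasis hR.ne_zero)
    (AdjoinRoot.minpoly_powerBasis_gen_of_monic hmon)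
    (by rw [AdjoinRoot.powerBasis_dim, hdeg])
end

section
/- The polynomial S = x^32 - 3x^31 - 124x^30 + 651x^29 + 5797x^28 - 44020x^27 - 46593x^26 + 1523309x^25 - 4960682x^24 - 28562129x^23 + 205283395x^22 + 345367838x^21 - 3865963779x^20 - 5281917640x^19 + 35629245810x^18 + 95827452774x^17 + 227525150938x^16 - 1735983387875x^15 - 9952753525850x^14 + 15867354189588x^13 + 146446287180279x^12 - 99789981007214x^11 - 1135328992145553x^10 - 171825071648506x^9 + 7446294546204081x^8 + 294530833190147x^7 - 24397472702475140x^6 - 9976638213111902x^5 + 61714590456038129x^4 + 16902762581347117x^3 - 13833080015551423x^2 - 202960986205176103x + 187532019539254309 is irreducible over the rational numbers ℚ. -/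
open Polynomial

noncomputable def S : Polynomial ℚ :=
  X^32 - 3*X^31 - 124*X^30 + 651*X^29 + 5797*X^28 - 44020*X^27 - 46593*X^26 + 1523309*X^25 - 4960682*X^24 - 28562129*X^23 + 205283395*X^22 + 345367838*X^21 - 3865963779*X^20 - 5281917640*X^19 + 35629245810*X^18 + 95827452774*X^17 + 227525150938*X^16 - 1735983387875*X^15 - 9952753525850*X^14 + 15867354189588*X^13 + 146446287180279*X^12 - 99789981007214*X^11 - 1135328992145553*X^10 - 171825071648506*X^9 + 7446294546204081*X^8 + 294530833190147*X^7 - 24397472702475140*X^6 - 9976638213111902*X^5 + 61714590456038129*X^4 + 16902762581347117*X^3 - 13833080015551423*X^2 - 202960986205176103*X + 187532019539254309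

noncomputable def SZ : Polynomial ℤ :=
  X^32 - 3*X^31 - 124*X^30 + 651*X^29 + 5797*X^28 - 44020*X^27 - 46593*X^26 + 1523309*X^25 - 4960682*X^24 - 28562129*X^23 + 205283395*X^22 + 345367838*X^21 - 3865963779*X^20 - 5281917640*X^19 + 35629245810*X^18 + 95827452774*X^17 + 227525150938*X^16 - 1735983387875*X^15 - 9952753525850*X^14 + 15867354189588*X^13 + 146446287180279*X^12 - 99789981007214*X^11 - 1135328992145553*X^10 - 171825071648506*X^9 + 7446294546204081*X^8 + 294530833190147*X^7 - 24397472702475140*X^6 - 9976638213111902*X^5 + 61714590456038129*X^4 + 16902762581347117*X^3 - 13833080015551423*X^2 - 202960986205176103*X + 187532019539254309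

namespace IrrS

def add : List ℕ → List ℕ → List ℕ
  | [], m => m
  | a :: l, [] => a :: l
  | a :: l, b :: m => (a + b) :: add l m

def smul (c : ℕ) : List ℕ → List ℕ
  | [] => []
  | a :: l => (c * a) :: smul c l

def mul : List ℕ → List ℕ → List ℕ
  | [], _ => []
  | a :: l, m => add (smul a m) (0 :: mul l m)

def shift : ℕ → List ℕ → List ℕ
  | 0, l => l
  | n + 1, l => 0 :: shift n l

def allz : List ℕ → Bool
  | [] => true
  | b :: m => Nat.beq 0 (b % 11) && allz m

def eqz : List ℕ → List ℕ → Bool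
  | [], m => allz m
  | a :: l, [] => Nat.beq (a % 11) 0 && eqz l []
  | a :: l, b :: m => Nat.beq (a % 11) (b % 11) && eqz l m

def lin : List ℕ → List (List ℕ) → List ℕ
  | [], _ => []
  | _ :: _, [] => []
  | c :: cs, r :: rs => add (smul c r) (lin cs rs)

def F : List ℕ := [7,8,0,2,5,9,7,4,7,10,4,8,9,0,8,0,8,9,4,1,4,2,9,9,10,7,3,2,0,2,8,8,1]

def rowsT : List (List ℕ × List ℕ) := [
  ([], [0,0,0,0,0,0,0,0,0,0,0,1]),
  ([], [0,0,0,0,0,0,0,0,0,0,0,0,0,0,0,0,0,0,0,0,0,0,1]),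
  ([8,10], [1,2,3,5,5,1,3,3,8,7,0,5,9,2,9,3,9,9,1,4,9,1,4,8,5,2,6,2,9,5,7,1]),
  ([5,0,3,2,6,7,1,3,6,1,10], [2,7,10,4,6,5,7,10,8,2,1,10,6,6,5,9,6,1,1,5,6,2,0,0,9,6,1,5,4,10,6,10]),
  ([5,5,1,8,1,1,6,3,6,8,1], [2,9,3,8,7,10,8,10,9,0,1,8,5,0,7,3,7,4,5,0,6,9,8,2,7,5,8,9,9,4,0,7]),
  ([0,0,8,6,2,3,2,8,0,1,4], [0,0,1,7,7,9,2,2,3,8,7,1,6,0,10,10,5,0,1,5,10,4,1,6,9,4,9,2,3,5,6,3]),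
  ([0,6,3,10,10,10,8,1,7,7,8], [0,9,3,6,8,10,5,1,9,0,6,4,10,2,4,6,4,10,9,2,4,5,5,6,4,4,8,0,4,8,5,3]),
  ([0,0,4,6,9,2,3,3,7,8,8], [0,0,6,8,1,6,3,8,6,3,10,10,2,7,10,8,10,1,1,7,6,5,1,9,5,9,1,1,9,6,3,7]),
  ([7,2,4,4,4,10,0,10,0,9,4], [5,4,0,8,0,7,10,0,10,2,0,3,3,8,4,8,0,4,8,5,7,9,8,6,1,3,1,6,0,7,6,5]),
  ([3,7,5,2,9,6,1,0,3,1,6], [10,7,3,5,9,10,3,10,4,4,0,9,7,5,3,0,7,1,7,7,0,2,0,7,4,5,3,5,6,2,3,1]),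
  ([3,9,1,2,9,10,6,8,10,5,10], [10,10,2,6,2,7,2,7,6,6,8,9,0,2,0,8,5,1,10,2,7,5,8,2,2,4,2,6,8,8,4,5]),
  ([2,6,6,2,2,8,7,2,8,3,6], [3,3,2,0,8,0,6,1,9,4,1,6,4,10,9,10,3,4,8,1,1,3,0,9,0,7,8,0,10,10,0,5]),
  ([1,8,7,8,0,7,1,9,7,7,6], [7,9,3,4,8,2,6,3,9,6,8,4,8,3,5,2,3,8,2,10,3,5,6,10,4,8,3,7,4,3,7,2]),
  ([2,1,3,8,10,1,8,4,7,9,9], [3,1,7,7,3,6,8,7,2,6,3,8,5,9,1,1,8,2,2,2,7,4,8,10,4,3,8,3,7,8,6,6]),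
  ([6,8,9,8,5,5,10,2,1,9,5], [9,5,6,8,2,0,10,8,3,6,0,8,5,1,10,7,8,9,10,7,4,2,1,10,6,9,8,2,4,6]),
  ([3,6,1,3,5,10,2,0,5], [10,0,0,2,9,4,4,5,5,5,6,8,8,0,3,10,2,1,6,7,2,3,0,9,2,4,1,4,3,3,1,1]),
  ([10,3,9,2,3,7,2,10,4,7,10], [4,2,10,7,5,9,7,2,3,10,7,5,5,3,5,7,0,8,4,1,10,9,3,6,1,7,2,7,0,9,3,10]),
  ([1,9,8,6,9,1,3,2,5,0,1], [7,5,7,9,2,6,4,5,9,4,8,4,9,8,8,5,2,0,7,5,1,3,1,4,7,9,2,10,4,4,5,6]),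
  ([4,6,5,2,2,5,4,7,8,10,5], [6,8,6,7,7,6,3,0,6,4,8,0,6,9,2,10,1,5,5,3,9,0,4,3,6,4,10,0,9,2,1,6]),
  ([8,9,2,9,7,7,8,1,0,3,5], [1,6,9,7,3,6,2,1,2,8,0,9,2,3,8,1,8,6,0,3,1,6,10,8,3,6,1,10,3,5,2,1]),
  ([0,2,6,8,10,8,6,3,10,6,10], [0,3,3,5,6,4,5,10,7,6,5,5,7,8,0,5,8,0,10,5,5,6,1,1,9,10,3,6,6,2,8,1]),
  ([4,4,6,10,7,4,10,3,6,0,10], [6,5,8,5,3,9,7,10,10,5,8,2,2,8,6,6,9,7,0,5,7,10,2,4,0,10,6,1,10,2,5,6]),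
  ([4,2,2,1,3,9,8,7,10,10,5], [6,2,8,9,9,5,10,7,9,10,6,7,2,7,5,9,7,1,2,1,10,7,3,3,3,10,7,8,5,7,3,1]),
  ([5,3,5,7,7,3,1,5,5,5,10], [2,6,4,0,4,4,0,2,8,9,6,0,1,4,2,2,10,7,9,4,8,5,3,0,2,2,7,6,10,7,0,10]),
  ([4,4,0,10,0,2,6,1,5,3,1], [6,5,10,1,9,4,10,6,5,1,1,2,0,0,3,9,8,7,8,8,9,8,4,9,7,5,7,3,10,10,4,6]),
  ([1,2,6,0,4,4,8,6,5,0,5], [7,0,3,6,4,3,0,10,3,6,8,3,2,9,6,7,4,9,8,2,5,8,9,3,4,9,8,0,9,0,6,5]),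
  ([2,2,6,1,10,1,9,1,10,1,6], [3,8,3,4,4,6,3,4,5,1,8,2,2,0,2,3,8,5,4,5,4,6,8,0,9,7,3,2,9,7,1,3]),
  ([5,7,7,0,6,4,5,5,9,1,8], [2,1,6,0,4,5,2,10,0,4,8,4,3,4,8,5,7,10,4,4,1,10,3,8,9,4,3,7,7,10,7,10]),
  ([10,3,3,0,1,7,7,10,3,7,1], [4,2,1,0,8,3,8,7,3,0,4,7,0,3,7,10,6,6,0,4,1,6,4,2,0,9,10,3,6,9,6,1]),
  ([2,10,4,9,4,1,4,6,5,2,10], [3,9,9,0,9,5,2,10,4,8,8,1,8,9,8,4,9,6,0,0,5,3,4,7,0,9,0,8,7,8,7,1]),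
  ([0,5,6,6,5,0,9,7,3,1,10], [0,2,5,2,5,0,7,8,9,8,2,6,3,5,7,6,2,3,9,9,3,6,5,8,2,6,1,6,10,9,6,3])]

def rows : List (List ℕ) := [1] :: rowsT.map Prod.snd

def chkRows : List ℕ → List (List ℕ × List ℕ) → Bool
  | _, [] => true
  | l, qr :: t => eqz (add (shift 11 l) (mul qr.1 F)) qr.2 && chkRows qr.2 t

def chkH : List ℕ → List (List ℕ) → Bool
  | _, [] => true
  | h, h' :: t => Nat.ble h.length 32 && (eqz (lin h rows) h' && chkH h' t)

def h16 : List ℕ := [1,6,8,10,8,6,1,3,3,9,9,6,10,8,9,3,7,5,7,5,4,6,1,1,7,6,10,6,0,10,2,2]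

def hsA : List (List ℕ) := [
  [0,0,0,0,0,0,0,0,0,0,0,1],
  [10,10,2,6,2,7,2,7,6,6,8,9,0,2,0,8,5,1,10,2,7,5,8,2,2,4,2,6,8,8,4,5],
  [5,6,4,0,6,2,4,5,7,6,5,8,3,0,1,7,9,9,1,5,1,1,7,7,10,0,3,2,10,7,2,9],
  [0,7,0,1,9,9,10,4,2,6,1,1,8,1,10,2,0,3,5,8,7,8,10,1,7,2,8,8,0,0,1,7],
  [3,1,6,1,4,5,4,7,3,3,4,7,0,8,5,10,6,7,10,0,8,3,9,0,1,0,0,9,8,8,4,7],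
  [1,0,4,1,3,0,1,5,10,3,1,7,9,0,0,4,9,9,3,6,3,8,1,1,4,2,2,3,4,1,5,9],
  [5,10,9,0,0,7,4,3,10,8,3,10,8,1,2,6,0,6,2,5,5,9,5,3,6,9,5,6,5,7,9,2],
  [2,9,3,10,7,9,2,9,10,9,7,7,5,6,8,3,1,2,8,1,0,9,4,4,5,10,0,1,3,8,8,5],
  [6,4,2,1,8,0,3,2,5,5,6,2,9,8,0,8,0,6,0,5,10,6,6,3,8,3,4,5,7,9,3],
  [9,2,0,8,10,5,0,7,7,3,3,10,7,7,1,1,3,7,2,9,2,0,9,0,1,8,4,0,7,1,10,10],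
  [10,9,5,2,0,5,2,0,9,5,2,2,9,2,4,3,6,6,8,7,4,9,2,3,6,8,6,3,10,8,0,5],
  [7,5,4,4,1,10,7,8,7,7,6,9,3,7,0,3,7,2,10,10,8,1,3,6,10,10,6,8,6,0,7,10],
  [4,8,9,7,7,9,1,8,5,8,5,1,3,5,5,8,0,2,7,7,1,7,2,2,0,2,1,1,5,0,9,3],
  [6,0,3,9,4,6,10,2,10,1,6,6,3,8,1,3,8,5,6,9,9,2,2,10,5,1,7,8,2,5,9,4],
  [1,8,9,7,2,3,9,3,9,10,8,1,6,8,7,8,3,10,5,6,1,3,5,0,4,2,6,7,1,10,2,1]]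

def hsB : List (List ℕ) := [
  [6,1,0,5,4,5,0,2,10,10,0,8,5,7,1,7,7,0,2,4,2,4,10,8,4,3,4,9,7,7,5,3],
  [7,1,0,6,1,5,10,1,3,6,0,4,7,7,4,10,4,4,3,10,4,7,0,10,6,0,7,10,2,10,5,10],
  [2,8,6,0,8,7,3,2,7,7,10,2,5,3,2,2,6,9,10,6,1,3,6,8,7,7,2,2,1,5,9],
  [10,0,0,2,10,7,9,0,5,9,6,10,1,2,5,0,4,3,3,6,2,0,2,9,3,3,10,4,8,7,4,1],
  [6,3,4,5,1,10,6,2,0,10,6,3,0,1,2,5,5,9,7,4,1,0,2,3,9,9,9,8,8,2,10,8],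
  [7,1,3,8,4,6,7,2,9,4,3,10,0,1,10,6,5,7,9,8,6,6,6,0,2,10,10,9,7,6,0,7],
  [2,5,0,4,7,8,3,10,0,6,4,2,8,5,3,10,2,6,1,7,0,9,4,2,8,3,5,9,9,0,0,2],
  [10,3,3,5,10,5,1,5,10,3,10,1,0,10,2,10,9,3,4,10,9,10,4,4,0,4,5,9,2,1,8,1],
  [8,0,4,8,0,5,2,10,9,8,4,4,10,0,4,1,1,3,8,4,1,5,9,5,10,4,10,5,2,9,0,7],
  [3,4,10,9,3,7,10,1,6,4,8,7,1,6,9,4,9,10,8,7,5,2,6,5,6,2,4,0,8,5,9,5],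
  [9,4,10,10,4,6,9,5,1,4,10,10,5,4,6,10,9,0,9,10,9,4,8,2,6,0,5,0,9,7,0,8],
  [4,2,2,4,9,7,9,0,3,4,5,10,7,6,0,8,8,3,5,8,6,7,1,2,0,3,7,8,10,1,6],
  [6,2,7,4,5,3,7,1,4,1,1,3,2,6,1,9,6,0,10,10,6,4,10,10,3,7,4,1,2,9,3,7],
  [9,2,7,4,5,9,8,1,5,9,9,5,5,9,9,7,1,5,10,10,2,8,9,3,10,2,8,0,3,4,10,2],
  [9,10,8,2,1,3,10,6,1,2,4,10,4,5,10,10,3,1,3,9,8,8,3,7,4,8,0,7,0,10,10,3]]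

def u : List ℕ := [2,10,3,6,4,8,7,8,10,6,3,3,0,9,0,5,3,10,9,6,3,5,1,3,5,4,7,3,1,10,1,8]

def v : List ℕ := [3,0,9,3,1,5,10,3,9,1,3,3,1,3,2,4,0,1,9,8,4,7,1,1,7,5,2,1,4,0,6]

theorem rows_ok : chkRows [1] rowsT = true := by decide +kernel

theorem hA_ok : chkH [0,1] (hsA ++ [h16]) = true := by decide +kernel

theorem hB_ok : chkH h16 (hsB ++ [[0,1]]) = true := by decide +kernel

theorem gcd_ok : eqz (add (mul u (add h16 [0,10])) (mul v F)) [1] = true := by decide +kernel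

section
variable {A : Type*} [CommRing A]

def ev (x : A) : List ℕ → A
  | [] => 0
  | a :: l => (a : A) + x * ev x l

theorem ev_add (x : A) : ∀ l m, ev x (add l m) = ev x l + ev x m
  | [], m => by simp [add, ev]
  | a :: l, [] => by simp [add, ev]
  | a :: l, b :: m => by simp only [add, ev, ev_add x l m]; push_cast; ring

theorem ev_smul (x : A) (c : ℕ) : ∀ l, ev x (smul c l) = c * ev x l
  | [] => by simp [smul, ev]
  | a :: l => by simp only [smul, ev, ev_smul x c l]; push_cast; ring

theorem ev_mul (x : A) : ∀ l m, ev x (mul l m) = ev x l * ev x m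
  | [], m => by simp [mul, ev]
  | a :: l, m => by
    simp only [mul, ev, ev_add, ev_smul, ev_mul x l m]; push_cast; ring

theorem ev_shift (x : A) : ∀ n l, ev x (shift n l) = x ^ n * ev x l
  | 0, l => by simp [shift]
  | n + 1, l => by simp only [shift, ev, ev_shift x n l]; push_cast; ring

variable [CharP A 11]

theorem cast_mod (a : ℕ) : ((a % 11 : ℕ) : A) = a := by
  rw [CharP.natCast_eq_natCast A 11]; exact Nat.mod_modEq a 11

theorem cast_eq {a b : ℕ} (h : Nat.beq (a % 11) (b % 11) = true) : (a : A) = b := by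
  rw [← cast_mod a, ← cast_mod b, Nat.eq_of_beq_eq_true h]

theorem ev_allz (x : A) : ∀ m, allz m = true → ev x m = 0
  | [], _ => rfl
  | b :: m, h => by
    simp only [allz, Bool.and_eq_true] at h
    have := cast_eq (A := A) (a := 0) (b := b) h.1
    simp [ev, ev_allz x m h.2, ← this]

theorem ev_eqz (x : A) : ∀ l m, eqz l m = true → ev x l = ev x m
  | [], m, h => (ev_allz x m h).symm
  | a :: l, [], h => by
    simp only [eqz, Bool.and_eq_true] at h
    have := cast_eq (A := A) (a := a) (b := 0) h.1
    simp [ev, ev_eqz x l [] h.2, this]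
  | a :: l, b :: m, h => by
    simp only [eqz, Bool.and_eq_true] at h
    simp only [ev, ev_eqz x l m h.2, cast_eq (A := A) h.1]

def good (x : A) : A → List (List ℕ) → Prop
  | _, [] => True
  | w, r :: rs => ev x r = w ∧ good x (w * x ^ 11) rs

theorem good_of_chk (x : A) (hF : ev x F = 0) : ∀ l t, chkRows l t = true →
    good x (ev x l * x ^ 11) (t.map Prod.snd)
  | _, [], _ => trivial
  | l, qr :: t, h => by
    simp only [chkRows, Bool.and_eq_true] at h
    have h1 := ev_eqz x _ _ h.1
    rw [ev_add, ev_mul, ev_shift, hF, mul_zero, add_zero, mul_comm] at h1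
    have h2 := good_of_chk x hF _ t h.2
    rw [← h1] at h2
    exact ⟨h1.symm, h2⟩

theorem ev_lin (x : A) : ∀ cs rs w, good x w rs → cs.length ≤ rs.length →
    ev x (lin cs rs) = w * ev (x ^ 11) cs
  | [], _, _, _, _ => by simp [lin, ev]
  | c :: cs, [], _, _, h => by simp at h
  | c :: cs, r :: rs, w, hg, h => by
    have := ev_lin x cs rs _ hg.2 (by simpa using h)
    simp only [lin, ev_add, ev_smul, this, hg.1, ev]
    ring

theorem ev_frob (x : A) : ∀ l, ev x l ^ 11 = ev (x ^ 11) l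
  | [] => by simp [ev]
  | a :: l => by
    have : Fact (Nat.Prime 11) := ⟨by norm_num⟩
    have ha : ((a : A)) ^ 11 = a := by
      have := congrArg (ZMod.castHom (dvd_refl 11) A) (ZMod.pow_card (p := 11) (a : ZMod 11))
      rw [map_pow, map_natCast] at this
      exact this
    simp only [ev]
    rw [add_pow_char (p := 11), mul_pow, ha, ev_frob x l]

theorem ev_chkH (x : A) (hF : ev x F = 0) (g : List ℕ) : ∀ t h k, chkH h (t ++ [g]) = true →
    ev x h = x ^ 11 ^ k → ev x g = x ^ 11 ^ (k + t.length + 1) := by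
  have hg : good x 1 rows := by
    have := good_of_chk x hF [1] rowsT rows_ok
    refine ⟨by simp [ev], ?_⟩
    simpa [ev] using this
  have key : ∀ h h' k, Nat.ble h.length 32 = true → eqz (lin h rows) h' = true →
      ev x h = x ^ 11 ^ k → ev x h' = x ^ 11 ^ (k + 1) := by
    intro h h' k h1 h2 h3
    rw [← ev_eqz x _ _ h2, ev_lin x h rows 1 hg (Nat.le_of_ble_eq_true h1), one_mul, ← ev_frob,
      h3, ← pow_mul, pow_succ]
  intro t
  induction t with
  | nil =>
    intro h k hc hk
    simp only [List.nil_append, chkH, Bool.and_eq_true] at hc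
    exact key h g k hc.1 hc.2.1 hk
  | cons h' t ih =>
    intro h k hc hk
    simp only [List.cons_append, chkH, Bool.and_eq_true] at hc
    have := ih h' (k + 1) hc.2.2 (key h h' k hc.1 hc.2.1 hk)
    rw [this, List.length_cons]
    congr 2
    omega

theorem frob16 (x : A) (hF : ev x F = 0) : ev x h16 = x ^ 11 ^ 16 :=
  ev_chkH x hF h16 hsA [0,1] 0 hA_ok (by simp [ev])

theorem frob32 (x : A) (hF : ev x F = 0) : x ^ 11 ^ 32 = x := by
  have := ev_chkH x hF [0,1] hsB h16 16 hB_ok (frob16 x hF)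
  rw [show 16 + hsB.length + 1 = 32 from rfl] at this
  rw [← this]
  simp [ev]

theorem ne16 [Nontrivial A] (x : A) (hF : ev x F = 0) : x ^ 11 ^ 16 ≠ x := by
  intro h
  have h1 := ev_eqz x _ _ gcd_ok
  rw [ev_add, ev_mul, ev_mul, hF, ev_add, frob16 x hF, h] at h1
  have h11 : (11 : A) = 0 := by exact_mod_cast CharP.cast_eq_zero A 11
  have : x + ev x [0, 10] = 0 := by
    simp only [ev]; push_cast; linear_combination x * h11
  rw [this] at h1
  simp [ev] at h1

end

theorem SZ_monic : SZ.Monic := by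
  unfold SZ; monicity!

theorem SZ_natDegree : SZ.natDegree = 32 := by
  unfold SZ; compute_degree!

theorem root_F (g : (ZMod 11)[X]) [CharP (AdjoinRoot g) 11]
    (h : g ∣ SZ.map (Int.castRingHom (ZMod 11))) : ev (AdjoinRoot.root g) F = 0 := by
  have h1 : AdjoinRoot.mk g (SZ.map (Int.castRingHom (ZMod 11))) = 0 :=
    AdjoinRoot.mk_eq_zero.2 h
  have h11 : (11 : AdjoinRoot g) = 0 := by exact_mod_cast CharP.cast_eq_zero (AdjoinRoot g) 11
  simp only [SZ, Polynomial.map_add, Polynomial.map_sub, Polynomial.map_mul, Polynomial.map_pow,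
    Polynomial.map_X, Polynomial.map_ofNat, map_add, map_sub, map_mul, map_pow, map_ofNat,
    AdjoinRoot.mk_X] at h1
  simp only [ev, F]
  push_cast
  linear_combination h1 - ((17048365412659482)*AdjoinRoot.root g^0 + (-18450998745925101)*AdjoinRoot.root g^1 + (-1257552728686493)*AdjoinRoot.root g^2 + (1536614780122465)*AdjoinRoot.root g^3 + (5610417314185284)*AdjoinRoot.root g^4 + (-906967110282901)*AdjoinRoot.root g^5 + (-2217952063861377)*AdjoinRoot.root g^6 + (26775530290013)*AdjoinRoot.root g^7 + (676935867836734)*AdjoinRoot.root g^8 + (-15620461058956)*AdjoinRoot.root g^9 + (-103211726558687)*AdjoinRoot.root g^10 + (-9071816455202)*AdjoinRoot.root g^11 + (13313298834570)*AdjoinRoot.root g^12 + (1442486744508)*AdjoinRoot.root g^13 + (-904795775078)*AdjoinRoot.root g^14 + (-157816671625)*AdjoinRoot.root g^15 + (20684104630)*AdjoinRoot.root g^16 + (8711586615)*AdjoinRoot.root g^17 + (3239022346)*AdjoinRoot.root g^18 + (-480174331)*AdjoinRoot.root g^19 + (-351451253)*AdjoinRoot.root g^20 + (31397076)*AdjoinRoot.root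 g^21 + (18662126)*AdjoinRoot.root g^22 + (-2596558)*AdjoinRoot.root g^23 + (-450972)*AdjoinRoot.root g^24 + (138482)*AdjoinRoot.root g^25 + (-4236)*AdjoinRoot.root g^26 + (-4002)*AdjoinRoot.root g^27 + (527)*AdjoinRoot.root g^28 + (59)*AdjoinRoot.root g^29 + (-12)*AdjoinRoot.root g^30 + (-1)*AdjoinRoot.root g^31 + (0)*AdjoinRoot.root g^32) * h11

theorem irr11 : Irreducible (SZ.map (Int.castRingHom (ZMod 11))) := by
  have : Fact (Nat.Prime 11) := ⟨by norm_num⟩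
  set f := SZ.map (Int.castRingHom (ZMod 11)) with hf
  have hfd : f.natDegree = 32 := by rw [hf, SZ_monic.natDegree_map, SZ_natDegree]
  have hf0 : f ≠ 0 := (SZ_monic.map _).ne_zero
  have hfu : ¬ IsUnit f := fun h => by
    have := natDegree_eq_zero_of_isUnit h
    omega
  obtain ⟨g, hg, hgf⟩ := WfDvdMonoid.exists_irreducible_factor hfu hf0
  have : Fact (Irreducible g) := ⟨hg⟩
  have : CharP (AdjoinRoot g) 11 := charP_of_injective_algebraMap
    (algebraMap (ZMod 11) (AdjoinRoot g)).injective 11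
  have hF := root_F g hgf
  have e : ∀ n, g.natDegree ∣ n ↔ AdjoinRoot.root g ^ 11 ^ n = AdjoinRoot.root g := by
    intro n
    rw [hg.natDegree_dvd_iff_dvd_X_pow_card_pow_sub_X, ← AdjoinRoot.mk_eq_zero, Nat.card_zmod,
      map_sub, map_pow, AdjoinRoot.mk_X, sub_eq_zero]
  have h32 : g.natDegree ∣ 2 ^ 5 := (e 32).2 (frob32 _ hF)
  have h16 : ¬ g.natDegree ∣ 16 := fun h => ne16 _ hF ((e 16).1 h)
  have hd : g.natDegree = 32 := by
    obtain ⟨k, hk, hk'⟩ := (Nat.dvd_prime_pow Nat.prime_two).1 h32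
    rw [hk'] at h16 ⊢
    clear hk' e hF
    interval_cases k <;> revert h16 <;> norm_num
  exact (associated_of_dvd_of_natDegree_le hgf hf0 (by omega)).irreducible hg

theorem map_SZ : SZ.map (algebraMap ℤ ℚ) = S := by
  simp only [SZ, S, Polynomial.map_add, Polynomial.map_sub, Polynomial.map_mul, Polynomial.map_pow,
    Polynomial.map_X, Polynomial.map_ofNat]

end IrrS

theorem irreducible_S : Irreducible S := by
  rw [← IrrS.map_SZ]
  have : Fact (Nat.Prime 11) := ⟨by norm_num⟩
  exact (IrrS.SZ_monic.irreducible_iff_irreducible_map_fraction_map).1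
    (IrrS.SZ_monic.irreducible_of_irreducible_map _ _ IrrS.irr11)
end
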